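/- Let Ω ⊆ ℝ^d be a nonempty open set, with d ∈ ℕ, and let f ∈ L¹(Ω) be nonnegative. Let x ∈ Ω and suppose that the upper approximate limit f^∨ is upper semicontinuous at x and that M_Ω f(x) ≥ f^∨(x). Then the non-centered maximal function M_Ω f : Ω → [0,∞] is upper semicontinuous at x. -/

import Mathlib

open MeasureTheory Metric Filter Topology
open scoped ENNReal

/-- The non-centered Hardy–Littlewood maximal function of `f` relative to the open set
`Ω ⊆ ℝᵈ`: the supremum of the averages of `|f|` over all open balls contained in `Ω`
that contain `x`, valued in `[0,∞]`. -/
noncomputable def maximalFn {d : ℕ} (Ω : Set (EuclideanSpace ℝ (Fin d)))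
    (f : EuclideanSpace ℝ (Fin d) → ℝ) (x : EuclideanSpace ℝ (Fin d)) : ℝ≥0∞ :=
  ⨆ (z : EuclideanSpace ℝ (Fin d)) (r : ℝ) (_ : 0 < r) (_ : x ∈ ball z r)
    (_ : ball z r ⊆ Ω),
      (∫⁻ y in ball z r, ENNReal.ofReal |f y| ∂volume) / volume (ball z r)

/-- The upper approximate limit `f^∨(x)` with respect to Lebesgue measure, valued in the
extended reals (with the convention `inf ∅ = +∞`). -/
noncomputable def upperApproxLimit {d : ℕ}
    (f : EuclideanSpace ℝ (Fin d) → ℝ) (x : EuclideanSpace ℝ (Fin d)) : EReal :=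
  sInf ((fun t : ℝ => (t : EReal)) ''
    {t : ℝ | Tendsto
      (fun r : ℝ => volume {y | y ∈ ball x r ∧ t < f y} / volume (ball x r))
      (𝓝[>] (0 : ℝ)) (𝓝 0)})

/-! Suppose `M_Ω f(x) < s` and `f^∨(x) < s`, and consider the balls `B ⊆ Ω` that contain a point
`y` near `x`. If `B` is very small then the average over `B` is at most `s`, because `f ≤ f^∨ < s`
almost everywhere near `x`, by the Lebesgue density theorem; if `B` is very large it is at most `s`
because `f` is integrable. The remaining balls form a compact family. A limit of such balls, as
`y → x`, is a ball in `Ω` whose closure contains `x`; its average is at most `M_Ω f(x) < s`, since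
it is itself a limit of balls in `Ω` that contain `x` and averages depend continuously on the ball.
-/

lemma continuousAt_measure_ball {α : Type*} [PseudoMetricSpace α] [ProperSpace α]
    [MeasurableSpace α] [OpensMeasurableSpace α] (ν : Measure α) [IsFiniteMeasureOnCompacts ν]
    {p : α × ℝ} (hp : ν (sphere p.1 p.2) = 0) :
    ContinuousAt (fun q : α × ℝ => ν (ball q.1 q.2)) p := by
  refine tendsto_measure_of_ae_tendsto_indicator _ measurableSet_ball
    (fun _ => measurableSet_ball) (measurableSet_ball (x := p.1) (ε := p.2 + 2))
    measure_ball_lt_top.ne ?_ ?_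
  · filter_upwards [continuousAt_fst (ball_mem_nhds p.1 one_pos),
      continuousAt_snd (Iio_mem_nhds (lt_add_one p.2))] with q hq₁ hq₂
    refine ball_subset_ball' ?_
    linarith [mem_ball.1 hq₁, show q.2 < p.2 + 1 from hq₂]
  · filter_upwards [compl_mem_ae_iff.2 hp] with y hy
    have hdist : ContinuousAt (fun q : α × ℝ => dist y q.1) p := by fun_prop
    have hradius : ContinuousAt (fun q : α × ℝ => q.2) p := continuousAt_snd
    rcases lt_or_gt_of_ne (show dist y p.1 ≠ p.2 from hy) with hlt | hgt
    · filter_upwards [hdist.eventually_lt hradius hlt] with q hq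
      exact iff_of_true hq hlt
    · filter_upwards [hradius.eventually_lt hdist hgt] with q hq
      exact iff_of_false hq.not_gt hgt.not_gt

lemma exists_radius_forall_measure_ball_le {α : Type*} [PseudoMetricSpace α] [MeasurableSpace α]
    {μ ν : Measure α} {x : α} {s : ℝ≥0∞} (h : ∀ᶠ A in (𝓝 x).smallSets, ν A ≤ s * μ A) :
    ∃ ρ > 0, ∀ y ∈ ball x ρ, ∀ p : α × ℝ, y ∈ ball p.1 p.2 → p.2 ≤ ρ →
      ν (ball p.1 p.2) ≤ s * μ (ball p.1 p.2) := by
  obtain ⟨V, hV, hVs⟩ := eventually_smallSets.1 h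
  obtain ⟨δ, hδ, hδV⟩ := Metric.mem_nhds_iff.1 hV
  refine ⟨δ / 3, by positivity, fun y hyx p hyp hp => hVs _ (Set.Subset.trans ?_ hδV)⟩
  refine ball_subset_ball' ?_
  linarith [dist_triangle_left p.1 x y, mem_ball.1 hyx, mem_ball.1 hyp]

lemma withDensity_apply_le_mul {α : Type*} [MeasurableSpace α] {μ : Measure α} [SFinite μ]
    {g : α → ℝ≥0∞} {A : Set α} {s : ℝ≥0∞} (h : ∀ᵐ y ∂μ, y ∈ A → g y ≤ s) :
    μ.withDensity g A ≤ s * μ A := by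
  rw [withDensity_apply', ← setLIntegral_const]
  exact setLIntegral_mono_ae aemeasurable_const h

section AdmissibleBalls

/-- The balls over which the maximal function relative to `Ω` averages at `x`, a ball being encoded
as the pair (centre, radius). The radius is positive because the ball contains `x`. -/
def admissibleBalls {α : Type*} [PseudoMetricSpace α] (Ω : Set α) (x : α) : Set (α × ℝ) :=
  {p | x ∈ ball p.1 p.2 ∧ ball p.1 p.2 ⊆ Ω}

lemma eventually_notMem_admissibleBalls {α : Type*} [PseudoMetricSpace α] {Ω : Set α} {x : α}
    {p : α × ℝ} (h : ¬(x ∈ closedBall p.1 p.2 ∧ ball p.1 p.2 ⊆ Ω)) :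
    ∀ᶠ yq : α × α × ℝ in 𝓝 (x, p), yq.2 ∉ admissibleBalls Ω yq.1 := by
  have hradius : ContinuousAt (fun yq : α × α × ℝ => yq.2.2) (x, p) := by fun_prop
  rcases not_and_or.1 h with hx | hΩ
  · have hdist : ContinuousAt (fun yq : α × α × ℝ => dist yq.1 yq.2.1) (x, p) := by fun_prop
    filter_upwards [hradius.eventually_lt hdist (not_le.1 hx)] with yq hlt hyq
    exact hlt.not_gt hyq.1
  · obtain ⟨w, hwp, hwΩ⟩ := Set.not_subset.1 hΩ
    have hdist : ContinuousAt (fun yq : α × α × ℝ => dist w yq.2.1) (x, p) := by fun_prop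
    filter_upwards [hdist.eventually_lt hradius hwp] with yq hlt hyq
    exact hwΩ (hyq.2 hlt)

variable {E : Type*} [NormedAddCommGroup E] [NormedSpace ℝ E] {Ω : Set E} {x z : E} {r : ℝ}

lemma mem_closure_admissibleBalls_of_closedBall_subset [ProperSpace E] (hΩ : IsOpen Ω)
    (hxz : x ∈ closedBall z r) (hzΩ : closedBall z r ⊆ Ω) :
    (z, r) ∈ closure (admissibleBalls Ω x) := by
  obtain ⟨δ, hδ, hsub⟩ := (isCompact_closedBall z r).exists_thickening_subset_open hΩ hzΩ
  rw [thickening_closedBall hδ (nonneg_of_mem_closedBall hxz)] at hsub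
  have hlim : Tendsto (fun ε : ℝ => (z, r + ε)) (𝓝[>] 0) (𝓝 (z, r)) := by
    have hcont : Continuous fun ε : ℝ => (z, r + ε) := by fun_prop
    simpa using (hcont.tendsto 0).mono_left nhdsWithin_le_nhds
  refine mem_closure_of_tendsto hlim ?_
  filter_upwards [Ioo_mem_nhdsGT hδ] with ε ⟨hε, hεδ⟩
  refine ⟨(mem_closedBall.1 hxz).trans_lt (by linarith), (ball_subset_ball ?_).trans hsub⟩
  linarith

lemma closedBall_lineMap_eq_image (x z : E) (r : ℝ) {c : ℝ} (hc : 0 < c) :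
    closedBall (AffineMap.lineMap x z c) (c * r) =
      (fun q => AffineMap.lineMap x q c) '' closedBall z r := by
  have hdist (q : E) : dist (AffineMap.lineMap x q c) (AffineMap.lineMap x z c) =
      c * dist q z := by
    rw [dist_eq_norm, dist_eq_norm, ← Real.norm_of_nonneg hc.le, ← norm_smul,
      Real.norm_of_nonneg hc.le]
    congr 1
    simp only [AffineMap.lineMap_apply_module]
    module
  ext p
  constructor
  · intro hp
    have hinv : AffineMap.lineMap x (AffineMap.lineMap x p c⁻¹) c = p := by
      simp [AffineMap.lineMap_apply, hc.ne']
    refine ⟨AffineMap.lineMap x p c⁻¹, ?_, hinv⟩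
    rw [mem_closedBall, ← hinv, hdist] at hp
    exact le_of_mul_le_mul_left hp hc
  · rintro ⟨q, hq, rfl⟩
    rw [mem_closedBall, hdist]
    gcongr
    exact hq

lemma closedBall_lineMap_subset [StrictConvexSpace ℝ E] (hx : x ∈ Ω) (hr : r ≠ 0)
    (hxz : x ∈ closedBall z r) (hzΩ : ball z r ⊆ Ω) {c : ℝ} (hc : c ∈ Set.Ioo (0 : ℝ) 1) :
    closedBall (AffineMap.lineMap x z c) (c * r) ⊆ Ω := by
  rw [closedBall_lineMap_eq_image x z r hc.1]
  rintro _ ⟨q, hq, rfl⟩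
  rcases eq_or_ne x q with rfl | hxq
  · simpa using hx
  · apply hzΩ
    rw [← interior_closedBall z hr]
    exact (strictConvex_closedBall ℝ z r).openSegment_subset hxz hq hxq
      (lineMap_mem_openSegment ℝ x q hc)

-- Shrinking the ball towards `x` moves its closure into `Ω`, by strict convexity.
lemma mem_closure_admissibleBalls [ProperSpace E] [StrictConvexSpace ℝ E] (hΩ : IsOpen Ω)
    (hx : x ∈ Ω) (hr : r ≠ 0) (hxz : x ∈ closedBall z r) (hzΩ : ball z r ⊆ Ω) :
    (z, r) ∈ closure (admissibleBalls Ω x) := by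
  have hlim : Tendsto (fun c : ℝ => (AffineMap.lineMap x z c, c * r)) (𝓝[<] 1) (𝓝 (z, r)) := by
    have hcont : Continuous fun c : ℝ => (AffineMap.lineMap x z c, c * r) := by
      simp only [AffineMap.lineMap_apply_module]
      fun_prop
    simpa using (hcont.tendsto 1).mono_left nhdsWithin_le_nhds
  refine isClosed_closure.mem_of_tendsto hlim ?_
  filter_upwards [Ioo_mem_nhdsLT (zero_lt_one (α := ℝ))] with c hc
  refine mem_closure_admissibleBalls_of_closedBall_subset hΩ ?_
    (closedBall_lineMap_subset hx hr hxz hzΩ hc)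
  rw [closedBall_lineMap_eq_image x z r hc.1]
  exact ⟨x, hxz, AffineMap.lineMap_same_apply x c⟩

end AdmissibleBalls

section MaximalDensity

/-- The non-centered maximal function, relative to `Ω`, of a measure `ν` with respect to `μ`. The
maximal function of a function `f` is the case where `ν` has density `|f|`. -/
noncomputable def maximalDensity {α : Type*} [PseudoMetricSpace α] [MeasurableSpace α]
    (μ ν : Measure α) (Ω : Set α) (x : α) : ℝ≥0∞ :=
  ⨆ p ∈ admissibleBalls Ω x, ν (ball p.1 p.2) / μ (ball p.1 p.2)

variable {E : Type*} [NormedAddCommGroup E] [NormedSpace ℝ E] [FiniteDimensional ℝ E]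
  [MeasurableSpace E] [BorelSpace E] {μ ν : Measure E} {Ω : Set E} {x : E} {s : ℝ≥0∞}

lemma closedBall_ae_eq_ball (μ : Measure E) [μ.IsAddHaarMeasure] (x : E) {r : ℝ} (hr : r ≠ 0) :
    closedBall x r =ᵐ[μ] ball x r := by
  rw [← sphere_union_ball, union_ae_eq_right]
  exact measure_mono_null Set.sdiff_subset (Measure.addHaar_sphere_of_ne_zero μ x hr)

lemma continuousAt_measure_ball_div [μ.IsAddHaarMeasure] [IsFiniteMeasureOnCompacts ν]
    (hν : ν ≪ μ) {p : E × ℝ} (hp : 0 < p.2) :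
    ContinuousAt (fun q : E × ℝ => ν (ball q.1 q.2) / μ (ball q.1 q.2)) p := by
  have hsphere : μ (sphere p.1 p.2) = 0 := Measure.addHaar_sphere_of_ne_zero μ p.1 hp.ne'
  exact ENNReal.Tendsto.div (continuousAt_measure_ball ν (hν hsphere))
    (.inr (measure_ball_pos μ p.1 hp).ne') (continuousAt_measure_ball μ hsphere)
    (.inl measure_ball_lt_top.ne)

lemma measure_ball_div_le_maximalDensity [StrictConvexSpace ℝ E] [μ.IsAddHaarMeasure]
    [IsFiniteMeasureOnCompacts ν] (hν : ν ≪ μ) (hΩ : IsOpen Ω) (hx : x ∈ Ω) {p : E × ℝ}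
    (hp : 0 < p.2) (hxp : x ∈ closedBall p.1 p.2) (hpΩ : ball p.1 p.2 ⊆ Ω) :
    ν (ball p.1 p.2) / μ (ball p.1 p.2) ≤ maximalDensity μ ν Ω x :=
  ContinuousWithinAt.closure_le (mem_closure_admissibleBalls hΩ hx hp.ne' hxp hpΩ)
    (continuousAt_measure_ball_div hν hp).continuousWithinAt continuousWithinAt_const
    fun q hq => le_iSup₂_of_le q hq le_rfl

lemma eventually_measure_ball_div_lt [StrictConvexSpace ℝ E] [μ.IsAddHaarMeasure]
    [IsFiniteMeasureOnCompacts ν] (hν : ν ≪ μ) (hΩ : IsOpen Ω) (hx : x ∈ Ω)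
    (hs : maximalDensity μ ν Ω x < s) {p : E × ℝ} (hp : 0 < p.2) :
    ∀ᶠ yq : E × E × ℝ in 𝓝 (x, p), yq.2 ∈ admissibleBalls Ω yq.1 →
      ν (ball yq.2.1 yq.2.2) / μ (ball yq.2.1 yq.2.2) < s := by
  by_cases h : x ∈ closedBall p.1 p.2 ∧ ball p.1 p.2 ⊆ Ω
  · have hlt := (measure_ball_div_le_maximalDensity hν hΩ hx hp h.1 h.2).trans_lt hs
    have hcont := (continuousAt_measure_ball_div hν hp).comp (x := (x, p)) continuousAt_snd
    exact (hcont.eventually_lt_const hlt).mono fun _ hyq _ => hyq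
  · exact (eventually_notMem_admissibleBalls h).mono fun _ hyq hmem => absurd hmem hyq

lemma tendsto_addHaar_ball_atTop [Nontrivial E] (μ : Measure E) [μ.IsAddHaarMeasure] (x : E) :
    Tendsto (fun r : ℝ => μ (ball x r)) atTop (𝓝 ∞) := by
  have hpow : Tendsto (fun r : ℝ => ENNReal.ofReal (r ^ Module.finrank ℝ E)) atTop (𝓝 ∞) :=
    ENNReal.tendsto_ofReal_atTop.comp (tendsto_pow_atTop Module.finrank_pos.ne')
  have hunit : μ (ball (0 : E) 1) ≠ 0 := (measure_ball_pos μ 0 one_pos).ne'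
  have hmul := ENNReal.Tendsto.mul_const (b := μ (ball (0 : E) 1)) hpow (.inl ENNReal.top_ne_zero)
  rw [ENNReal.top_mul hunit] at hmul
  refine hmul.congr' ?_
  filter_upwards [eventually_gt_atTop 0] with r hr
  rw [Measure.addHaar_ball_of_pos μ x hr]

lemma exists_radius_forall_measure_ball_div_le [Nontrivial E] (μ ν : Measure E)
    [μ.IsAddHaarMeasure] [IsFiniteMeasure ν] (hs : 0 < s) :
    ∃ R : ℝ, ∀ p : E × ℝ, R ≤ p.2 → ν (ball p.1 p.2) / μ (ball p.1 p.2) ≤ s := by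
  have hlim : Tendsto (fun r : ℝ => ν Set.univ / μ (ball (0 : E) r)) atTop (𝓝 0) := by
    simpa using ENNReal.Tendsto.const_div (tendsto_addHaar_ball_atTop μ 0)
      (.inr (measure_ne_top ν Set.univ))
  obtain ⟨R, hR⟩ := eventually_atTop.1 (hlim.eventually_lt_const hs)
  refine ⟨R, fun p hp => ?_⟩
  calc ν (ball p.1 p.2) / μ (ball p.1 p.2)
      ≤ ν Set.univ / μ (ball (0 : E) p.2) := by
        rw [Measure.addHaar_ball_center μ p.1]
        gcongr
        exact Set.subset_univ _
    _ ≤ s := (hR p.2 hp).le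

theorem eventually_maximalDensity_le [StrictConvexSpace ℝ E] [μ.IsAddHaarMeasure]
    [IsFiniteMeasure ν] (hν : ν ≪ μ) (hΩ : IsOpen Ω) (hx : x ∈ Ω)
    (hs : maximalDensity μ ν Ω x < s) (hsmall : ∀ᶠ A in (𝓝 x).smallSets, ν A ≤ s * μ A) :
    ∀ᶠ y in 𝓝 x, maximalDensity μ ν Ω y ≤ s := by
  rcases subsingleton_or_nontrivial E with hE | hE
  · exact Eventually.of_forall fun y => Subsingleton.elim x y ▸ hs.le
  obtain ⟨ρ, hρ, hle_small⟩ := exists_radius_forall_measure_ball_le hsmall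
  obtain ⟨R, hle_large⟩ := exists_radius_forall_measure_ball_div_le μ ν (bot_le.trans_lt hs)
  have hK : IsCompact (closedBall x (ρ + R) ×ˢ Set.Icc ρ R) :=
    (isCompact_closedBall x (ρ + R)).prod isCompact_Icc
  have hmedium := hK.eventually_forall_of_forall_eventually
    (P := fun y q => q ∈ admissibleBalls Ω y → ν (ball q.1 q.2) / μ (ball q.1 q.2) < s)
    fun p hp => eventually_measure_ball_div_lt hν hΩ hx hs (hρ.trans_le hp.2.1)
  filter_upwards [hmedium, ball_mem_nhds x hρ] with y hle_medium hyx
  refine iSup₂_le fun p hp => ?_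
  rcases le_total p.2 ρ with hpρ | hρp
  · exact ENNReal.div_le_of_le_mul (hle_small y hyx p hp.1 hpρ)
  rcases le_total R p.2 with hRp | hpR
  · exact hle_large p hRp
  refine (hle_medium p ⟨?_, hρp, hpR⟩ hp).le
  rw [mem_closedBall]
  linarith [dist_triangle_left p.1 x y, mem_ball.1 hyx, mem_ball.1 hp.1]

end MaximalDensity

section EuclideanSpace

variable {d : ℕ} {f : EuclideanSpace ℝ (Fin d) → ℝ} {Ω : Set (EuclideanSpace ℝ (Fin d))}
  {x : EuclideanSpace ℝ (Fin d)}

lemma maximalFn_eq_maximalDensity (Ω : Set (EuclideanSpace ℝ (Fin d)))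
    (f : EuclideanSpace ℝ (Fin d) → ℝ) (x : EuclideanSpace ℝ (Fin d)) :
    maximalFn Ω f x = maximalDensity volume
      ((volume.restrict Ω).withDensity fun y => ENNReal.ofReal |f y|) Ω x := by
  have hball {z : EuclideanSpace ℝ (Fin d)} {r : ℝ} (hzΩ : ball z r ⊆ Ω) :
      (volume.restrict Ω).withDensity (fun y => ENNReal.ofReal |f y|) (ball z r) =
        ∫⁻ y in ball z r, ENNReal.ofReal |f y| := by
    rw [withDensity_apply _ measurableSet_ball, Measure.restrict_restrict_of_subset hzΩ]
  apply le_antisymm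
  · refine iSup₂_le fun z r => iSup₂_le fun _ hxz => iSup_le fun hzΩ => ?_
    rw [← hball hzΩ]
    exact le_iSup₂_of_le (z, r) ⟨hxz, hzΩ⟩ le_rfl
  · refine iSup₂_le fun ⟨z, r⟩ ⟨hxz, hzΩ⟩ => ?_
    rw [hball hzΩ]
    exact le_iSup₂_of_le z r <| le_iSup₂_of_le (pos_of_mem_ball hxz) hxz <|
      le_iSup_of_le hzΩ le_rfl

lemma tendsto_measure_inter_closedBall_div {A : Set (EuclideanSpace ℝ (Fin d))} {s : ℝ}
    (hA : ∀ y ∈ A, s ≤ f y) (hx : upperApproxLimit f x < s) :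
    Tendsto (fun r => volume (A ∩ closedBall x r) / volume (closedBall x r)) (𝓝[>] 0) (𝓝 0) := by
  obtain ⟨_, ⟨t, ht, rfl⟩, hts⟩ := sInf_lt_iff.1 hx
  have hts : t < s := EReal.coe_lt_coe_iff.1 hts
  refine tendsto_of_tendsto_of_tendsto_of_le_of_le' tendsto_const_nhds ht
    (Eventually.of_forall fun _ => bot_le) ?_
  filter_upwards [self_mem_nhdsWithin] with r hr
  have hball : closedBall x r =ᵐ[volume] ball x r :=
    closedBall_ae_eq_ball volume x (ne_of_gt hr)
  rw [measure_congr hball, measure_congr ((ae_eq_refl A).inter hball)]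
  gcongr
  exact fun y hy => ⟨hy.2, hts.trans_le (hA y hy.1)⟩

lemma ae_le_upperApproxLimit (f : EuclideanSpace ℝ (Fin d) → ℝ) :
    ∀ᵐ y, (f y : EReal) ≤ upperApproxLimit f y := by
  have hrat (q : ℚ) : ∀ᵐ y, ¬(upperApproxLimit f y < (q : ℝ) ∧ (q : ℝ) < f y) := by
    set A := {y | upperApproxLimit f y < (q : ℝ) ∧ (q : ℝ) < f y}
    have hdensity := Besicovitch.ae_tendsto_measure_inter_div volume A
    have hnot : A ⊆ {y | ¬Tendsto
        (fun r => volume (A ∩ closedBall y r) / volume (closedBall y r)) (𝓝[>] 0) (𝓝 1)} :=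
      fun y hy hone => zero_ne_one (tendsto_nhds_unique
        (tendsto_measure_inter_closedBall_div (fun w hw => hw.2.le) hy.1) hone)
    have hA : volume A = 0 := by
      rw [← Set.inter_eq_right.2 hnot, ← nonpos_iff_eq_zero]
      exact (Measure.le_restrict_apply A _).trans_eq (ae_iff.1 hdensity)
    exact compl_mem_ae_iff.2 hA
  filter_upwards [ae_all_iff.2 hrat] with y hy
  by_contra! hlt
  obtain ⟨q, hq⟩ := EReal.lt_iff_exists_rat_btwn.1 hlt
  exact hy q (by exact_mod_cast hq)

lemma eventually_smallSets_withDensity_abs_le {s : NNReal} (hf0 : ∀ y, 0 ≤ f y)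
    (hu : ∀ᶠ y in 𝓝 x, upperApproxLimit f y < (s : ℝ)) :
    ∀ᶠ A in (𝓝 x).smallSets,
      (volume.restrict Ω).withDensity (fun y => ENNReal.ofReal |f y|) A ≤ s * volume A := by
  filter_upwards [hu.smallSets] with A hA
  have hle : ∀ᵐ y ∂volume.restrict Ω, y ∈ A → ENNReal.ofReal |f y| ≤ s := by
    filter_upwards [ae_restrict_of_ae (ae_le_upperApproxLimit f)] with y hy hyA
    have hfs : f y ≤ s := EReal.coe_le_coe_iff.1 (hy.trans (hA y hyA).le)
    rw [abs_of_nonneg (hf0 y)]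
    exact ENNReal.ofReal_le_of_le_toReal hfs
  refine (withDensity_apply_le_mul hle).trans ?_
  gcongr
  exact Measure.restrict_le_self

end EuclideanSpace

/-- Let `Ω ⊆ ℝᵈ` be a nonempty open set and `f ∈ L¹(Ω)` nonnegative.
If the upper approximate limit `f^∨` is upper semicontinuous at `x ∈ Ω` (within `Ω`) and
`M_Ω f(x) ≥ f^∨(x)`, then the non-centered maximal function `M_Ω f` is upper
semicontinuous at `x` (within `Ω`). -/
theorem maximalFn_upperSemicontinuousWithinAt {d : ℕ}
    (Ω : Set (EuclideanSpace ℝ (Fin d))) (hΩ : IsOpen Ω) (hΩne : Ω.Nonempty)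
    (f : EuclideanSpace ℝ (Fin d) → ℝ) (hf : IntegrableOn f Ω volume)
    (hf0 : ∀ y, 0 ≤ f y)
    (x : EuclideanSpace ℝ (Fin d)) (hx : x ∈ Ω)
    (husc : UpperSemicontinuousWithinAt (upperApproxLimit f) Ω x)
    (hM : upperApproxLimit f x ≤ (maximalFn Ω f x : EReal)) :
    UpperSemicontinuousWithinAt (maximalFn Ω f) Ω x := by
  intro t ht
  obtain ⟨s, hMs, hst⟩ := ENNReal.lt_iff_exists_nnreal_btwn.1 ht
  have hfin : IsFiniteMeasure
      ((volume.restrict Ω).withDensity fun y => ENNReal.ofReal |f y|) :=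
    isFiniteMeasure_withDensity_ofReal hf.abs.hasFiniteIntegral
  have hac : (volume.restrict Ω).withDensity (fun y => ENNReal.ofReal |f y|) ≪ volume :=
    (withDensity_absolutelyContinuous _ _).trans Measure.restrict_le_self.absolutelyContinuous
  have hu : ∀ᶠ y in 𝓝 x, upperApproxLimit f y < (s : ℝ) := by
    rw [← hΩ.nhdsWithin_eq hx]
    exact husc _ (hM.trans_lt (EReal.coe_ennreal_lt_coe_ennreal_iff.2 hMs))
  rw [maximalFn_eq_maximalDensity] at hMs
  have hle := eventually_maximalDensity_le hac hΩ hx hMs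
    (eventually_smallSets_withDensity_abs_le hf0 hu)
  filter_upwards [nhdsWithin_le_nhds hle] with y hy
  rw [maximalFn_eq_maximalDensity]
  exact hy.trans_lt hst
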